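/- The marginal probability that a fixed edge e appears in a spanning tree drawn from the w-uniform distribution on spanning trees of a connected weighted graph G equals its leverage score l_e = w_e · R_eff(u,v), where e = (u,v). -/

import Mathlib

open Matrix

/-- `B` is the Moore–Penrose pseudoinverse of `A`. -/
def IsMoorePenrose {n : Type*} [Fintype n] [DecidableEq n] (A B : Matrix n n ℝ) : Prop :=
  A * B * A = A ∧ B * A * B = B ∧ (A * B)ᵀ = A * B ∧ (B * A)ᵀ = B * A


noncomputable section Helpers

/-- Graph of an edge finset. -/
abbrev FG {V : Type*} (S : Finset (Sym2 V)) : SimpleGraph V :=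
  SimpleGraph.fromEdgeSet (↑S : Set (Sym2 V))

open Classical in
/-- Real-valued indicator. -/
def ind (p : Prop) : ℝ := if p then 1 else 0

/-- `S` is a two-component spanning forest separating `a` from `b`. -/
def F2 {V : Type*} (S : Finset (Sym2 V)) (a b : V) : Prop :=
  (FG S).IsAcyclic ∧ ¬ (FG S).Reachable a b ∧ ∀ z, (FG S).Reachable a z ∨ (FG S).Reachable b z

lemma FG_insert {V : Type*} [DecidableEq V] (S : Finset (Sym2 V)) (a b : V) :
    FG (insert s(a, b) S) = FG S ⊔ SimpleGraph.edge a b := by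
  ext x y
  simp only [FG, Finset.coe_insert, SimpleGraph.fromEdgeSet_adj, SimpleGraph.sup_adj,
    SimpleGraph.edge_adj, Set.mem_insert_iff, Sym2.eq_iff]
  tauto

lemma FG_erase {V : Type*} [DecidableEq V] (S : Finset (Sym2 V)) (e : Sym2 V) :
    FG (S.erase e) = (FG S).deleteEdges {e} := by
  ext x y
  simp only [FG, Finset.coe_erase, SimpleGraph.fromEdgeSet_adj, SimpleGraph.deleteEdges_adj,
    Set.mem_sdiff, Set.mem_singleton_iff]
  tauto

lemma walk_inv {V : Type*} (G : SimpleGraph V) (a b x z : V)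
    (p : (G ⊔ SimpleGraph.edge a b).Walk x z) (h : G.Reachable a x ∨ G.Reachable b x) :
    G.Reachable a z ∨ G.Reachable b z := by
  induction p with
  | nil => exact h
  | cons hadj p ih =>
    apply ih
    rw [SimpleGraph.sup_adj, SimpleGraph.edge_adj] at hadj
    rcases hadj with hadj | ⟨⟨rfl, rfl⟩ | ⟨rfl, rfl⟩, _⟩
    · exact h.imp (fun h => h.trans hadj.reachable) (fun h => h.trans hadj.reachable)
    · exact Or.inr (SimpleGraph.Reachable.refl _)
    · exact Or.inl (SimpleGraph.Reachable.refl _)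

lemma F2_iff {V : Type*} [DecidableEq V] (S : Finset (Sym2 V)) (a b : V) (hab : a ≠ b) :
    (s(a, b) ∉ S ∧ (FG (insert s(a, b) S)).IsTree) ↔ F2 S a b := by
  rw [FG_insert, SimpleGraph.isTree_iff, SimpleGraph.isAcyclic_sup_fromEdgeSet_iff]
  constructor
  · rintro ⟨h1, h2, h3, h4⟩
    refine ⟨h3, ?_, ?_⟩
    · intro h
      rcases h4 h with h | h
      · exact hab h
      · exact h1 (by simpa using h.1)
    · intro z
      obtain ⟨p⟩ := h2.preconnected a z
      exact walk_inv _ a b a z p (Or.inl (SimpleGraph.Reachable.refl _))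
  · rintro ⟨h1, h2, h3⟩
    refine ⟨fun h => h2 (SimpleGraph.Adj.reachable ⟨by simpa using h, hab⟩), ?_, h1,
      fun h => absurd h h2⟩
    have key : ∀ z, (FG S ⊔ SimpleGraph.edge a b).Reachable a z := by
      intro z
      rcases h3 z with h | h
      · exact h.mono le_sup_left
      · refine SimpleGraph.Reachable.trans (SimpleGraph.Adj.reachable ?_) (h.mono le_sup_left)
        rw [SimpleGraph.sup_adj, SimpleGraph.edge_adj]
        exact Or.inr ⟨Or.inl ⟨rfl, rfl⟩, hab⟩
    have : Nonempty V := ⟨a⟩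
    exact ⟨fun x y => (key x).symm.trans (key y)⟩

lemma swap_ind {V : Type*} (S : Finset (Sym2 V)) (u v x y : V) :
    ind (F2 S u v) * (ind ((FG S).Reachable u x) - ind ((FG S).Reachable u y)) =
    ind (F2 S x y) * (ind ((FG S).Reachable y v) - ind ((FG S).Reachable y u)) := by
  by_cases hac : (FG S).IsAcyclic
  swap
  · simp [ind, F2, hac]
  have hs : ∀ {p q}, (FG S).Reachable p q → (FG S).Reachable q p := fun h => h.symm
  have ht : ∀ {p q r}, (FG S).Reachable p q → (FG S).Reachable q r → (FG S).Reachable p r :=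
    fun h h' => h.trans h'
  by_cases h1 : F2 S u v
  · obtain ⟨_, h2, h3⟩ := id h1
    have e : F2 S x y ↔ ¬ (FG S).Reachable x y := by
      refine ⟨fun h => h.2.1, fun h => ⟨hac, h, fun z => ?_⟩⟩
      have := h3 x; have := h3 y; have := h3 z
      grind
    have := h3 x; have := h3 y
    by_cases hx : (FG S).Reachable u x <;> by_cases hy : (FG S).Reachable u y <;>
    by_cases hxy : (FG S).Reachable x y <;> by_cases hyv : (FG S).Reachable y v <;>
    by_cases hyu : (FG S).Reachable y u <;> simp [ind, h1, e, *] <;> grind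
  · by_cases h4 : F2 S x y
    · have h5 : (FG S).Reachable y v ↔ (FG S).Reachable y u := by
        by_contra hne
        apply h1
        obtain ⟨_, h2, h3⟩ := h4
        have := h3 u; have := h3 v
        refine ⟨hac, by grind, fun z => ?_⟩
        have := h3 z
        grind
      rw [propext h5, sub_self, mul_zero]
      simp [ind, h1]
    · simp [ind, h1, h4]

lemma first_step {V : Type*} [Fintype V] [DecidableEq V] (T : Finset (Sym2 V))
    (hT : (FG T).IsTree) (hl : ∀ e ∈ T, ¬ e.IsDiag) (x z : V) :
    ∑ y ∈ Finset.univ.filter (fun y => s(x, y) ∈ T),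
      ind ((FG (T.erase s(x, y))).Reachable y z) = ind (z ≠ x) := by
  have hadj : ∀ y, s(x, y) ∈ T → (FG T).Adj x y := fun y hy =>
    ⟨by simpa using hy, fun h => hl _ hy (by simpa using h)⟩
  have hbr : ∀ y, s(x, y) ∈ T → ¬ (FG (T.erase s(x, y))).Reachable x y := by
    intro y hy
    rw [FG_erase]
    exact SimpleGraph.isAcyclic_iff_forall_adj_isBridge.1 hT.isAcyclic (hadj y hy)
  by_cases hz : z = x
  · subst hz
    rw [Finset.sum_eq_zero]
    · simp [ind]
    · intro y hy
      have := hbr y (by simpa using hy)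
      rw [ind, if_neg (fun h => this h.symm)]
  · obtain ⟨p, hp, -⟩ := hT.existsUnique_path x z
    cases p with
    | nil => exact absurd rfl hz
    | @cons _ y₀ _ h₀ p =>
      have hp' := (SimpleGraph.Walk.cons_isPath_iff _ _).1 hp
      have hy₀ : s(x, y₀) ∈ T := by simpa using h₀.1
      rw [Finset.sum_eq_single y₀]
      · rw [ind, ind, if_pos, if_pos hz]
        rw [FG_erase, SimpleGraph.reachable_deleteEdges_iff_exists_walk]
        exact ⟨p, fun h => hp'.2 (p.fst_mem_support_of_mem_edges h)⟩
      · intro y hy hne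
        have hy : s(x, y) ∈ T := by simpa using hy
        rw [ind, if_neg]
        intro hr
        apply hne
        obtain ⟨q, hq⟩ := hr.exists_isPath
        have hle : FG (T.erase s(x, y)) ≤ FG T :=
          SimpleGraph.fromEdgeSet_mono (by simp)
        have hxq : x ∉ q.support := fun hx => hbr y hy ⟨(q.takeUntil x hx).reverse⟩
        have hq2 : (SimpleGraph.Walk.cons (hadj y hy) (q.mapLe hle)).IsPath := by
          rw [SimpleGraph.Walk.cons_isPath_iff]
          exact ⟨hq.mapLe hle, by simpa using hxq⟩
        have := (hT.existsUnique_path x z).unique hq2 hp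
        simpa using congrArg SimpleGraph.Walk.snd this
      · intro h; exact absurd hy₀ (by simpa using h)

/-- Potential. -/
def pot {V : Type*} (E : Finset (Sym2 V)) (w : Sym2 V → ℝ) (u v x : V) : ℝ :=
  ∑ S ∈ E.powerset, (∏ e ∈ S, w e) * (ind (F2 S u v) * ind ((FG S).Reachable u x))

/-- Reindexing `T = insert e S`. -/
lemma reindex {V : Type*} [DecidableEq V] (E : Finset (Sym2 V)) (w : Sym2 V → ℝ)
    (a b : V) (hab : a ≠ b) (he : s(a, b) ∈ E) (f : Finset (Sym2 V) → ℝ) :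
    w s(a, b) * ∑ S ∈ E.powerset, (∏ e ∈ S, w e) * (ind (F2 S a b) * f S) =
    ∑ T ∈ E.powerset, (∏ e ∈ T, w e) *
      (ind ((FG T).IsTree) * (ind (s(a, b) ∈ T) * f (T.erase s(a, b)))) := by
  classical
  have h1 : ∀ S, ind (F2 S a b) * f S =
      if s(a, b) ∉ S then ind ((FG (insert s(a, b) S)).IsTree) * f S else 0 := by
    intro S
    have := F2_iff S a b hab
    by_cases h : s(a, b) ∈ S <;> simp [ind, ← this, h]
  have h2 : ∀ T : Finset (Sym2 V), (∏ e ∈ T, w e) *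
      (ind ((FG T).IsTree) * (ind (s(a, b) ∈ T) * f (T.erase s(a, b)))) =
      if s(a, b) ∈ T then (∏ e ∈ T, w e) * (ind ((FG T).IsTree) * f (T.erase s(a, b))) else 0 := by
    intro T
    by_cases h : s(a, b) ∈ T <;> simp [ind, h]
  simp only [h1, h2, mul_ite, mul_zero]
  rw [← Finset.sum_filter, ← Finset.sum_filter, Finset.mul_sum]
  refine Finset.sum_bij' (fun S _ => insert s(a, b) S) (fun T _ => T.erase s(a, b)) ?_ ?_ ?_ ?_ ?_
  · intro S hS
    simp only [Finset.mem_filter, Finset.mem_powerset] at hS ⊢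
    exact ⟨Finset.insert_subset he hS.1, Finset.mem_insert_self _ _⟩
  · intro S hS
    simp only [Finset.mem_filter, Finset.mem_powerset] at hS ⊢
    exact ⟨(Finset.erase_subset _ _).trans hS.1, Finset.notMem_erase _ _⟩
  · intro S hS
    simp only [Finset.mem_filter, Finset.mem_powerset] at hS
    exact Finset.erase_insert hS.2
  · intro S hS
    simp only [Finset.mem_filter, Finset.mem_powerset] at hS
    exact Finset.insert_erase hS.2
  · intro S hS
    simp only [Finset.mem_filter, Finset.mem_powerset] at hS
    rw [Finset.erase_insert hS.2, Finset.prod_insert hS.2]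
    ring

lemma flow {V : Type*} [Fintype V] [DecidableEq V]
    (E : Finset (Sym2 V)) (w : Sym2 V → ℝ)
    (hloop : ∀ e ∈ E, ¬ e.IsDiag) (u v x : V) :
    ∑ y ∈ Finset.univ.filter (fun y => s(x, y) ∈ E),
      w s(x, y) * (pot E w u v x - pot E w u v y) =
    (ind (v ≠ x) - ind (u ≠ x)) * ∑ T ∈ E.powerset, (∏ e ∈ T, w e) * ind ((FG T).IsTree) := by
  classical
  have h1 : ∀ y ∈ Finset.univ.filter (fun y => s(x, y) ∈ E),
      w s(x, y) * (pot E w u v x - pot E w u v y) =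
      ∑ T ∈ E.powerset, (∏ e ∈ T, w e) * (ind ((FG T).IsTree) * (ind (s(x, y) ∈ T) *
        (ind ((FG (T.erase s(x, y))).Reachable y v)
          - ind ((FG (T.erase s(x, y))).Reachable y u)))) := by
    intro y hy
    have hy : s(x, y) ∈ E := by simpa using hy
    have hxy : x ≠ y := fun h => hloop _ hy (by simpa using h)
    rw [← reindex E w x y hxy hy
      (fun S => ind ((FG S).Reachable y v) - ind ((FG S).Reachable y u))]
    congr 1
    rw [pot, pot, ← Finset.sum_sub_distrib]
    refine Finset.sum_congr rfl fun S _ => ?_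
    rw [← swap_ind]
    ring
  rw [Finset.sum_congr rfl h1, Finset.sum_comm, Finset.mul_sum]
  refine Finset.sum_congr rfl fun T hT => ?_
  have hTE : T ⊆ E := by simpa using hT
  by_cases ht : (FG T).IsTree
  swap
  · simp [ind, ht]
  have hl : ∀ e ∈ T, ¬ e.IsDiag := fun e he => hloop e (hTE he)
  rw [← first_step T ht hl x v, ← first_step T ht hl x u, ← Finset.sum_sub_distrib,
    ← Finset.mul_sum, ← Finset.mul_sum]
  have : ∑ y ∈ Finset.univ.filter (fun y => s(x, y) ∈ E), (ind (s(x, y) ∈ T) *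
        (ind ((FG (T.erase s(x, y))).Reachable y v)
          - ind ((FG (T.erase s(x, y))).Reachable y u))) =
      ∑ y ∈ Finset.univ.filter (fun y => s(x, y) ∈ T),
        (ind ((FG (T.erase s(x, y))).Reachable y v)
          - ind ((FG (T.erase s(x, y))).Reachable y u)) := by
    rw [Finset.sum_filter, Finset.sum_filter]
    refine Finset.sum_congr rfl fun y _ => ?_
    by_cases h : s(x, y) ∈ T
    · simp [h, hTE h, ind]
    · simp [h, ind]
  rw [this]
  ring

lemma deg_sum {V : Type*} [Fintype V] [DecidableEq V]
    (E : Finset (Sym2 V)) (w : Sym2 V → ℝ) (x : V) :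
    ∑ e ∈ E.filter (fun e => x ∈ e), w e =
      ∑ y ∈ Finset.univ.filter (fun y => s(x, y) ∈ E), w s(x, y) := by
  symm
  refine Finset.sum_bij (fun y _ => s(x, y)) ?_ ?_ ?_ ?_
  · intro y hy
    simpa using hy
  · intro y _ y' _ h
    exact Sym2.congr_right.1 h
  · intro e he
    simp only [Finset.mem_filter] at he
    obtain ⟨y, rfl⟩ := Sym2.mem_iff_exists.1 he.2
    exact ⟨y, by simpa using he.1, rfl⟩
  · intros; rfl

lemma lap_mulVec {V : Type*} [Fintype V] [DecidableEq V]
    (E : Finset (Sym2 V)) (w : Sym2 V → ℝ) (hloop : ∀ e ∈ E, ¬ e.IsDiag)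
    (L : Matrix V V ℝ)
    (hL : L = Matrix.of fun i j =>
      if i = j then ∑ e ∈ E.filter (fun e => i ∈ e), w e
      else if s(i, j) ∈ E then - w s(i, j) else 0) (f : V → ℝ) (x : V) :
    (L *ᵥ f) x = ∑ y ∈ Finset.univ.filter (fun y => s(x, y) ∈ E), w s(x, y) * (f x - f y) := by
  have hxx : s(x, x) ∉ E := fun h => hloop _ h (by simp)
  have : ∀ y, L x y * f y = (if x = y then (∑ e ∈ E.filter (fun e => x ∈ e), w e) * f x else 0)
      - (if s(x, y) ∈ E then w s(x, y) * f y else 0) := by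
    intro y
    rw [hL, Matrix.of_apply]
    by_cases h : x = y
    · subst h; simp [hxx]
    · by_cases h' : s(x, y) ∈ E <;> simp [h, h']
  simp only [Matrix.mulVec, dotProduct, this, Finset.sum_sub_distrib, mul_sub]
  rw [Finset.sum_ite_eq, if_pos (Finset.mem_univ _), deg_sum, Finset.sum_filter, Finset.sum_filter,
    Finset.sum_filter, Finset.sum_mul]
  simp [ite_mul]

lemma tau_pos {V : Type*} [Fintype V] [DecidableEq V]
    (E : Finset (Sym2 V)) (w : Sym2 V → ℝ) (hw : ∀ e ∈ E, 0 < w e) (hconn : (FG E).Connected) :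
    0 < ∑ T ∈ E.powerset, (∏ e ∈ T, w e) * ind ((FG T).IsTree) := by
  classical
  obtain ⟨G, hG, ht⟩ := hconn.exists_isTree_le
  have hpos : ∀ T ∈ E.powerset, 0 < ∏ e ∈ T, w e := fun T hT =>
    Finset.prod_pos fun e he => hw e (Finset.mem_powerset.1 hT he)
  refine Finset.sum_pos' (fun T hT => mul_nonneg (hpos T hT).le ?_) ⟨G.edgeFinset, ?_, ?_⟩
  · unfold ind; split_ifs <;> simp
  · rw [Finset.mem_powerset]
    intro e he
    rw [SimpleGraph.mem_edgeFinset] at he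
    have := SimpleGraph.edgeSet_mono hG he
    simp at this
    exact this.1
  · have hmem : G.edgeFinset ∈ E.powerset := by
      rw [Finset.mem_powerset]
      intro e he
      rw [SimpleGraph.mem_edgeFinset] at he
      have := SimpleGraph.edgeSet_mono hG he
      simp at this
      exact this.1
    have : FG G.edgeFinset = G := by simp [FG]
    rw [this, ind, if_pos ht, mul_one]
    exact hpos _ hmem

end Helpers


theorem stmt16 {V : Type*} [Fintype V] [DecidableEq V]
    (E : Finset (Sym2 V)) (w : Sym2 V → ℝ)
    (hloop : ∀ e ∈ E, ¬ e.IsDiag) (hw : ∀ e ∈ E, 0 < w e)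
    (hconn : (SimpleGraph.fromEdgeSet (↑E : Set (Sym2 V))).Connected)
    (u v : V) (huv : u ≠ v) (he : s(u, v) ∈ E)
    (L : Matrix V V ℝ)
    (hL : L = Matrix.of fun i j =>
      if i = j then ∑ e ∈ E.filter (fun e => i ∈ e), w e
      else if s(i, j) ∈ E then - w s(i, j) else 0)
    (Lp : Matrix V V ℝ) (hLp : IsMoorePenrose L Lp)
    (b : V → ℝ) (hb : b = fun i => if i = u then 1 else if i = v then -1 else 0) :
    -- the total weight of spanning trees containing the edge {u,v} equals the
    -- leverage score w_e · R_eff(u,v) times the total weight of all spanning trees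
    (∑ T ∈ @Finset.filter _
        (fun T : Finset (Sym2 V) => (SimpleGraph.fromEdgeSet (↑T : Set (Sym2 V))).IsTree ∧ s(u, v) ∈ T)
        (Classical.decPred _) E.powerset, ∏ e ∈ T, w e) =
      (w s(u, v) * (b ⬝ᵥ Lp *ᵥ b)) *
        ∑ T ∈ @Finset.filter _
          (fun T : Finset (Sym2 V) => (SimpleGraph.fromEdgeSet (↑T : Set (Sym2 V))).IsTree)
          (Classical.decPred _) E.powerset, ∏ e ∈ T, w e := by
  classical
  set τ := ∑ T ∈ E.powerset, (∏ e ∈ T, w e) * ind ((FG T).IsTree) with hτ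
  have hτpos : 0 < τ := tau_pos E w hw hconn
  have e2 : (∑ T ∈ @Finset.filter _
          (fun T : Finset (Sym2 V) => (SimpleGraph.fromEdgeSet (↑T : Set (Sym2 V))).IsTree)
          (Classical.decPred _) E.powerset, ∏ e ∈ T, w e) = τ := by
    rw [Finset.sum_filter, hτ]
    refine Finset.sum_congr rfl fun T _ => ?_
    by_cases h : (FG T).IsTree
    · rw [if_pos h, ind, if_pos h, mul_one]
    · rw [if_neg h, ind, if_neg h, mul_zero]
  have hpv : pot E w u v v = 0 := by
    refine Finset.sum_eq_zero fun S _ => ?_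
    by_cases h : F2 S u v
    · simp [ind, h.2.1]
    · simp [ind, h]
  have e1 : (∑ T ∈ @Finset.filter _
        (fun T : Finset (Sym2 V) => (SimpleGraph.fromEdgeSet (↑T : Set (Sym2 V))).IsTree ∧ s(u, v) ∈ T)
        (Classical.decPred _) E.powerset, ∏ e ∈ T, w e) =
      w s(u, v) * (pot E w u v u - pot E w u v v) := by
    rw [hpv, sub_zero, pot]
    have := reindex E w u v huv he (fun S => ind ((FG S).Reachable u u))
    rw [this, Finset.sum_filter]
    refine Finset.sum_congr rfl fun T _ => ?_
    by_cases h : (FG T).IsTree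
    · by_cases h' : s(u, v) ∈ T
      · rw [if_pos ⟨h, h'⟩]; simp [ind, h, h']
      · rw [if_neg (fun hh => h' hh.2)]; simp [ind, h']
    · rw [if_neg (fun hh => h hh.1)]; simp [ind, h]
  have hφ : L *ᵥ (pot E w u v) = τ • b := by
    funext x
    rw [lap_mulVec E w hloop L hL, flow E w hloop, ← hτ, hb]
    simp only [Pi.smul_apply, smul_eq_mul, ind]
    by_cases h1 : x = u
    · subst h1; simp [huv.symm]
    · by_cases h2 : x = v
      · subst h2; simp [h1, Ne.symm h1]
      · simp [h1, h2, Ne.symm h1, Ne.symm h2]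
  have hsymm : Lᵀ = L := by
    ext i j
    rw [hL, Matrix.transpose_apply, Matrix.of_apply, Matrix.of_apply]
    by_cases h : i = j
    · subst h; rfl
    · simp [h, Ne.symm h, Sym2.eq_swap (a := i) (b := j)]
  have hbφ : b ⬝ᵥ pot E w u v = pot E w u v u - pot E w u v v := by
    have : b = Pi.single u 1 - Pi.single v 1 := by
      funext x
      rw [hb]
      by_cases h1 : x = u
      · subst h1; simp [huv]
      · by_cases h2 : x = v
        · subst h2; simp [h1]
        · simp [h1, h2]
    rw [this, sub_dotProduct]
    simp
  have key : τ * (τ * (b ⬝ᵥ Lp *ᵥ b)) = τ * (b ⬝ᵥ pot E w u v) := by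
    have h1 : τ * (τ * (b ⬝ᵥ Lp *ᵥ b)) = (τ • b) ⬝ᵥ Lp *ᵥ (τ • b) := by
      rw [Matrix.mulVec_smul, smul_dotProduct, dotProduct_smul, smul_eq_mul, smul_eq_mul]
    have h2 : (L *ᵥ pot E w u v) = pot E w u v ᵥ* L := by
      conv_lhs => rw [← hsymm, Matrix.mulVec_transpose]
    have h3 : τ * (b ⬝ᵥ pot E w u v) = (τ • b) ⬝ᵥ pot E w u v := by
      rw [smul_dotProduct, smul_eq_mul]
    rw [h1, h3, ← hφ]
    conv_rhs => rw [h2, ← Matrix.dotProduct_mulVec, ← hLp.1]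
    conv_lhs => enter [1]; rw [h2]
    rw [← Matrix.dotProduct_mulVec, Matrix.mulVec_mulVec, Matrix.mulVec_mulVec, Matrix.mul_assoc]
  have key2 := mul_left_cancel₀ hτpos.ne' key
  rw [e1, e2, ← hbφ, ← key2]
  ring
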